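/- Let M be the 27 × 27 integer matrix obtained by stacking vertically the three Kronecker products r ⊗ I₃ ⊗ I₃, I₃ ⊗ r ⊗ I₃, and I₃ ⊗ I₃ ⊗ r, where I₃ is the 3 × 3 identity matrix and r = (1, 1, 1). Let x_p = (0,0,0,0,53,0,0,0,0,0,52,2,52,2652,104,2,104,2,0,0,0,0,106,2,0,2,0) ∈ ℤ²⁷. Then x_p is the unique vector x ∈ ℤ²⁷ with all coordinates nonnegative satisfying M x = M x_p and x₂₇ = 0; i.e., the set of such vectors has exactly 1 element. -/

import Mathlib

/-!
Read `x ∈ ℤ²⁷` as a 3 × 3 × 3 array `x (i₁, i₂, i₃)`. The rows of `M` are the sums along the 27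
axis-parallel lines of the array, so `M x = M x_p` says that `x` and `x_p` have the same line sums
(`line_sums_eq`). Since `x` is nonnegative, it vanishes on every line on which the sum of `x_p` is
zero. In the layers `i₁ = 1` and `i₁ = 3` these lines leave only the following unknown entries:

* in layer 1 the entry `(1, 2, 2)`, which a line sum determines;
* in layer 3 the four entries with `i₂, i₃ ∈ {2, 3}`, which the line sums determine once
  `x (3, 3, 3) = x₂₇ = 0` is known.

Layer 2 then follows from the sums along the first axis. All of this is linear arithmetic.
-/

open Matrix Kronecker

/-- The 1 × 3 all-ones row vector `r = (1, 1, 1)`. -/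
def rOnes : Matrix (Fin 1) (Fin 3) ℤ := Matrix.of fun _ _ => 1

/-- Lexicographic identification of index triples `(i₁, i₂, i₃)` with `Fin 27`
(first coordinate most significant), matching the lexicographic ordering of the triples
`(i₁, i₂, i₃) ∈ {1, 2, 3}³` used to index the 27 coordinates. -/
def colEquiv : (Fin 3 × Fin 3) × Fin 3 ≃ Fin 27 :=
  (Equiv.prodCongr finProdFinEquiv (Equiv.refl (Fin 3))).trans finProdFinEquiv

def rowEquiv1 : (Fin 1 × Fin 3) × Fin 3 ≃ Fin 9 :=
  (Equiv.prodCongr finProdFinEquiv (Equiv.refl (Fin 3))).trans finProdFinEquiv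

def rowEquiv2 : (Fin 3 × Fin 1) × Fin 3 ≃ Fin 9 :=
  (Equiv.prodCongr finProdFinEquiv (Equiv.refl (Fin 3))).trans finProdFinEquiv

def rowEquiv3 : (Fin 3 × Fin 3) × Fin 1 ≃ Fin 9 :=
  (Equiv.prodCongr finProdFinEquiv (Equiv.refl (Fin 1))).trans finProdFinEquiv

/-- The 27 × 27 matrix obtained by stacking vertically the three Kronecker products
`r ⊗ I₃ ⊗ I₃`, `I₃ ⊗ r ⊗ I₃` and `I₃ ⊗ I₃ ⊗ r`, where `I₃` is the 3 × 3 identity matrix and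
`r = (1, 1, 1)` is the 1 × 3 all-ones row, with columns indexed lexicographically by triples. -/
def M : Matrix (Fin 27) (Fin 27) ℤ :=
  Matrix.reindex
    ((rowEquiv1.sumCongr (rowEquiv2.sumCongr rowEquiv3)).trans
      (((Equiv.refl (Fin 9)).sumCongr finSumFinEquiv).trans finSumFinEquiv))
    colEquiv
    (Matrix.fromRows
      (rOnes ⊗ₖ (1 : Matrix (Fin 3) (Fin 3) ℤ) ⊗ₖ (1 : Matrix (Fin 3) (Fin 3) ℤ))
      (Matrix.fromRows
        ((1 : Matrix (Fin 3) (Fin 3) ℤ) ⊗ₖ rOnes ⊗ₖ (1 : Matrix (Fin 3) (Fin 3) ℤ))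
        ((1 : Matrix (Fin 3) (Fin 3) ℤ) ⊗ₖ (1 : Matrix (Fin 3) (Fin 3) ℤ) ⊗ₖ rOnes)))

/-- The particular solution of block 211 (coordinates indexed lexicographically by triples,
coordinate 27 corresponding to (3,3,3)). -/
def xp : Fin 27 → ℤ := ![0,0,0,0,53,0,0,0,0,0,52,2,52,2652,104,2,104,2,0,0,0,0,106,2,0,2,0]

/-- The rows of `M` are the axis-parallel line sums of the array `x (i₁, i₂, i₃)`: equality of the
images under `M` gives equality of the line sums in each of the three directions. -/
lemma line_sums_eq {x y : Fin 27 → ℤ} (h : M.mulVec x = M.mulVec y) (a b : Fin 3) :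
    (∑ c, x (colEquiv ((c, a), b)) = ∑ c, y (colEquiv ((c, a), b))) ∧
    (∑ c, x (colEquiv ((a, c), b)) = ∑ c, y (colEquiv ((a, c), b))) ∧
    (∑ c, x (colEquiv ((a, b), c)) = ∑ c, y (colEquiv ((a, b), c))) := by
  -- the bijection from the rows of the stacked matrix to the rows of `M`
  let e := (rowEquiv1.sumCongr (rowEquiv2.sumCongr rowEquiv3)).trans
      (((Equiv.refl (Fin 9)).sumCongr finSumFinEquiv).trans finSumFinEquiv)
  have key (z : Fin 27 → ℤ) :
      M.mulVec z (e (Sum.inl ((0, a), b))) = ∑ c, z (colEquiv ((c, a), b)) ∧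
      M.mulVec z (e (Sum.inr (Sum.inl ((a, 0), b)))) = ∑ c, z (colEquiv ((a, c), b)) ∧
      M.mulVec z (e (Sum.inr (Sum.inr ((a, b), 0)))) = ∑ c, z (colEquiv ((a, b), c)) := by
    have hM (r) : M.mulVec z (e r) = ∑ p, M (e r) (colEquiv p) * z (colEquiv p) :=
      (colEquiv.sum_comp fun j => M (e r) j * z j).symm
    have hr (r p) : M (e r) (colEquiv p) = Matrix.fromRows
        (rOnes ⊗ₖ (1 : Matrix (Fin 3) (Fin 3) ℤ) ⊗ₖ (1 : Matrix (Fin 3) (Fin 3) ℤ))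
        (Matrix.fromRows
          ((1 : Matrix (Fin 3) (Fin 3) ℤ) ⊗ₖ rOnes ⊗ₖ (1 : Matrix (Fin 3) (Fin 3) ℤ))
          ((1 : Matrix (Fin 3) (Fin 3) ℤ) ⊗ₖ (1 : Matrix (Fin 3) (Fin 3) ℤ) ⊗ₖ rOnes)) r p := by
      simp only [M, Matrix.reindex_apply, Matrix.submatrix_apply, Equiv.symm_apply_apply, e]
    simp only [hM, hr]
    refine ⟨?_, ?_, ?_⟩ <;> simp [Fintype.sum_prod_type, Matrix.one_apply, rOnes, ite_and]
    rw [Finset.sum_comm]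
    simp
  obtain ⟨hx₁, hx₂, hx₃⟩ := key x
  obtain ⟨hy₁, hy₂, hy₃⟩ := key y
  rw [← hx₁, ← hx₂, ← hx₃, ← hy₁, ← hy₂, ← hy₃, h]
  exact ⟨rfl, rfl, rfl⟩

/-- In 0-based numbering, the triple `(a, b, c)` sits at coordinate `9 a + 3 b + c`. -/
lemma colEquiv_eq (a b c : Fin 3) :
    colEquiv ((a, b), c) = ⟨9 * a + 3 * b + c, by omega⟩ := by
  revert a b c; decide

lemma eq_xp_of_solution {x : Fin 27 → ℤ} (h0 : ∀ i, 0 ≤ x i)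
    (h : M.mulVec x = M.mulVec xp) (h26 : x 26 = 0) : x = xp := by
  have L := line_sums_eq h
  simp only [colEquiv_eq, Fin.forall_fin_succ, Fin.sum_univ_succ] at L h0
  simp [xp] at L h0
  clear h
  -- layer 1: every entry other than `(1, 2, 2)` lies on a line with sum 0
  have layer1 : x 0 = 0 ∧ x 1 = 0 ∧ x 2 = 0 ∧ x 3 = 0 ∧ x 4 = 53 ∧ x 5 = 0 ∧ x 6 = 0 ∧
      x 7 = 0 ∧ x 8 = 0 := by
    lia
  -- layer 3: the first row and column vanish, and `x 26 = 0` determines the remaining 2 × 2 block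
  have layer3 : x 18 = 0 ∧ x 19 = 0 ∧ x 20 = 0 ∧ x 21 = 0 ∧ x 22 = 106 ∧ x 23 = 2 ∧ x 24 = 0 ∧
      x 25 = 2 := by
    lia
  -- layer 2: sums along the first axis
  have layer2 : x 9 = 0 ∧ x 10 = 52 ∧ x 11 = 2 ∧ x 12 = 52 ∧ x 13 = 2652 ∧ x 14 = 104 ∧
      x 15 = 2 ∧ x 16 = 104 ∧ x 17 = 2 := by
    lia
  clear L h0
  funext i
  fin_cases i <;> simp [xp, layer1, layer2, layer3, h26]

/-- `x_p` is the unique nonnegative integer vector `x` with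
`M x = M x_p` and `x₂₇ = 0` (block 211); i.e., this solution set is `{x_p}`, and in
particular it has exactly 1 element. -/
theorem block211_unique_solution :
    {x : Fin 27 → ℤ | (∀ i, 0 ≤ x i) ∧ M.mulVec x = M.mulVec xp ∧ x 26 = 0} = {xp} ∧
    {x : Fin 27 → ℤ | (∀ i, 0 ≤ x i) ∧ M.mulVec x = M.mulVec xp ∧ x 26 = 0}.ncard = 1 := by
  have hS : {x : Fin 27 → ℤ | (∀ i, 0 ≤ x i) ∧ M.mulVec x = M.mulVec xp ∧ x 26 = 0} = {xp} := by
    ext x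
    refine ⟨fun ⟨h0, h, h26⟩ => eq_xp_of_solution h0 h h26, ?_⟩
    rintro rfl
    exact ⟨by decide, rfl, rfl⟩
  exact ⟨hS, by rw [hS, Set.ncard_singleton]⟩
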